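/- Let S be a commutative semigroup with zero and let n ≤ 2 be a positive integer. Then χ(Γ(S)) = n if and only if ω(Γ(S)) = n. -/

import Mathlib

/-- A commutative semigroup with a zero element. -/
class CommSemigroupWithZero (S : Type*) extends SemigroupWithZero S where
  mul_comm : ∀ a b : S, a * b = b * a

variable (S : Type*) [CommSemigroupWithZero S]

/-- The set of zero-divisors of `S`. -/
def zdivs : Set S := {x | ∃ y, y ≠ 0 ∧ x * y = 0}

/-- The vertex set `Z(S)* = Z(S) \ {0}` of the zero-divisor graph. -/
def zdVerts : Set S := {x | x ≠ 0 ∧ x ∈ zdivs S}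

/-- The zero-divisor graph `Γ(S)`. -/
def zdGraph : SimpleGraph (zdVerts S) where
  Adj x y := x ≠ y ∧ (x : S) * y = 0
  symm := by
    constructor
    rintro x y ⟨hne, h⟩
    exact ⟨hne.symm, by rw [CommSemigroupWithZero.mul_comm]; exact h⟩
  loopless := ⟨fun x h => h.1 rfl⟩

/-- `I` is an ideal of the semigroup `S`. -/
def IsIdeal (I : Set S) : Prop := I.Nonempty ∧ ∀ x ∈ I, ∀ s : S, x * s ∈ I

/-- `p` is a prime ideal of the semigroup `S`. -/
def IsPrimeIdeal (p : Set S) : Prop :=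
  IsIdeal S p ∧ ∀ x y : S, (∀ s : S, x * s * y ∈ p) → x ∈ p ∨ y ∈ p

/-- `x` is nilpotent: `x ^ (n + 1) = 0` for some `n`. -/
def IsNil (x : S) : Prop := ∃ n : ℕ, (fun y => x * y)^[n] x = 0

/-- The annihilator of `a`. -/
def Ann (a : S) : Set S := {s | s * a = 0}

/-- The set of associated primes of `S`. -/
def Ass : Set (Set S) := {p | IsPrimeIdeal S p ∧ ∃ x : S, p = Ann S x}

/-!
The point is that a triangle-free `Γ(S)` is bipartite. In a triangle-free graph the neighbours of
any vertex `a` are independent, so it suffices to choose `a` such that every edge has an endpoint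
adjacent to `a`. If some `z ≠ 0` satisfies `z * z = 0`, take `a = z`; otherwise take `a` to be an
endpoint of an edge `ab`. Suppose an edge `xy` misses the neighbours of `a`. In the first case
`zx, zy, z` annihilate each other, and are a triangle unless `zx = zy`, when `x, y, zx` is one; in
the second case `ax, ay, b` is a triangle.
-/

section Graph

variable {V : Type*} {G : SimpleGraph V}

theorem chromaticNumber_eq_iff_of_cliqueFree_imp_colorable {n : ℕ}
    (h : ∀ k ≤ n, G.CliqueFree (k + 1) → G.Colorable k) :
    G.chromaticNumber = n ↔
      (∃ T : Finset V, G.IsNClique n T) ∧ ∀ T : Finset V, G.IsClique ↑T → T.card ≤ n := by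
  constructor
  · intro hχ
    have hcol : G.Colorable n := SimpleGraph.chromaticNumber_le_iff_colorable.1 hχ.le
    refine ⟨?_, fun T hT => hT.card_le_of_colorable hcol⟩
    cases n with
    | zero => exact ⟨∅, SimpleGraph.isNClique_empty.2 rfl⟩
    | succ m =>
      by_contra! hfree
      have hle : (↑(m + 1) : ℕ∞) ≤ m :=
        hχ ▸ (h m m.le_succ hfree).chromaticNumber_le
      exact m.not_succ_le_self (Nat.cast_le.1 hle)
  · rintro ⟨⟨T, hT⟩, hmax⟩
    have hfree : G.CliqueFree (n + 1) := fun U hU =>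
      n.not_succ_le_self (hU.card_eq.symm.trans_le (hmax U hU.isClique))
    exact le_antisymm (h n le_rfl hfree).chromaticNumber_le
      (hT.card_eq ▸ hT.isClique.card_le_chromaticNumber)

theorem isBipartite_of_cliqueFree_three_of_forall_adj {a : V} (hG : G.CliqueFree 3)
    (ha : ∀ x y, G.Adj x y → G.Adj a x ∨ G.Adj a y) : G.IsBipartite := by
  have hindep : G.IsIndepSet (G.neighborSet a) := G.isIndepSet_neighborSet_of_triangleFree hG a
  refine SimpleGraph.IsBipartiteWith.isBipartite
    (s := G.neighborSet a) (t := (G.neighborSet a)ᶜ) ⟨disjoint_compl_right, fun x y hxy => ?_⟩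
  rcases ha x y hxy with hx | hy
  · exact .inl ⟨hx, fun hy => hindep hx hy hxy.ne hxy⟩
  · exact .inr ⟨fun hx => hindep hx hy hxy.ne hxy, hy⟩

end Graph

section ZeroDivisorGraph

variable {S}

instance CommSemigroupWithZero.toCommSemigroup : CommSemigroup S where
  mul_comm := CommSemigroupWithZero.mul_comm

namespace zdGraph

theorem eq_or_eq_or_eq_of_cliqueFree_three (hG : (zdGraph S).CliqueFree 3) {x y z : S}
    (hx : x ≠ 0) (hy : y ≠ 0) (hz : z ≠ 0) (hxy : x * y = 0) (hxz : x * z = 0)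
    (hyz : y * z = 0) : x = y ∨ x = z ∨ y = z := by
  classical
  by_contra! hne
  obtain ⟨hne_xy, hne_xz, hne_yz⟩ := hne
  let X : zdVerts S := ⟨x, hx, y, hy, hxy⟩
  let Y : zdVerts S := ⟨y, hy, z, hz, hyz⟩
  let Z : zdVerts S := ⟨z, hz, x, hx, by rw [mul_comm, hxz]⟩
  exact hG {X, Y, Z} (SimpleGraph.is3Clique_triple_iff.2
    ⟨⟨Subtype.coe_ne_coe.1 hne_xy, hxy⟩, ⟨Subtype.coe_ne_coe.1 hne_xz, hxz⟩,
      ⟨Subtype.coe_ne_coe.1 hne_yz, hyz⟩⟩)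

theorem adj_or_adj_of_mul_self_eq_zero (hG : (zdGraph S).CliqueFree 3) {x y z : zdVerts S}
    (hz : (z : S) * z = 0) (hxy : (zdGraph S).Adj x y) :
    (zdGraph S).Adj z x ∨ (zdGraph S).Adj z y := by
  by_contra! hnadj
  obtain ⟨hnx, hny⟩ := hnadj
  have hzx : (z * x : S) ≠ 0 := fun h => hnx ⟨fun hzx => hny (hzx ▸ hxy), h⟩
  have hzy : (z * y : S) ≠ 0 := fun h => hny ⟨fun hzy => hnx (hzy ▸ hxy.symm), h⟩
  have hz_mul (s : S) : z * (z * s) = 0 := by rw [← mul_assoc, hz, zero_mul]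
  have hx_zy : (x * (z * y) : S) = 0 := by rw [mul_left_comm, hxy.2, mul_zero]
  have hy_zx : (y * (z * x) : S) = 0 := by rw [mul_left_comm, hxy.symm.2, mul_zero]
  have hzx_zy : (z * x * (z * y) : S) = 0 := by rw [mul_assoc, hx_zy, mul_zero]
  have hzx_ne : (z * x : S) ≠ z := fun h => hzy <| by
    rw [← h, mul_assoc, hxy.2, mul_zero]
  have hzy_ne : (z * y : S) ≠ z := fun h => hzx <| by
    rw [← h, mul_assoc, hxy.symm.2, mul_zero]
  have heq : (z * x : S) = z * y := by
    simpa only [hzx_ne, hzy_ne, or_false] using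
      eq_or_eq_or_eq_of_cliqueFree_three hG hzx hzy z.2.1 hzx_zy
        (by rw [mul_comm, hz_mul]) (by rw [mul_comm, hz_mul])
  have hx_zx : (x * (z * x) : S) = 0 := by rw [heq, hx_zy]
  rcases eq_or_eq_or_eq_of_cliqueFree_three hG x.2.1 y.2.1 hzx hxy.2 hx_zx hy_zx with h | h | h
  · exact hxy.ne (Subtype.ext h)
  · exact hzx (by rw [h, hz_mul])
  · exact hzy (by rw [h, hz_mul])

theorem adj_or_adj_of_reduced (hG : (zdGraph S).CliqueFree 3)
    (hred : ∀ s : S, s * s = 0 → s = 0) {a b x y : zdVerts S} (hab : (zdGraph S).Adj a b)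
    (hxy : (zdGraph S).Adj x y) : (zdGraph S).Adj a x ∨ (zdGraph S).Adj a y := by
  have hne {s t : S} (hs : s ≠ 0) (hst : s * t = 0) : s ≠ t := fun h =>
    hs (hred s (by rwa [← h] at hst))
  by_contra! hnadj
  have hax : (a * x : S) ≠ 0 := fun h => hnadj.1 ⟨Subtype.coe_ne_coe.1 (hne a.2.1 h), h⟩
  have hay : (a * y : S) ≠ 0 := fun h => hnadj.2 ⟨Subtype.coe_ne_coe.1 (hne a.2.1 h), h⟩
  have hax_ay : (a * x * (a * y) : S) = 0 := by rw [mul_mul_mul_comm, hxy.2, mul_zero]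
  have hmul_b (s : S) : a * s * b = 0 := by rw [mul_right_comm, hab.2, zero_mul]
  rcases eq_or_eq_or_eq_of_cliqueFree_three hG hax hay b.2.1 hax_ay (hmul_b x) (hmul_b y)
    with h | h | h
  · exact hne hax hax_ay h
  · exact hne hax (hmul_b x) h
  · exact hne hay (hmul_b y) h

theorem isBipartite_of_cliqueFree_three (hG : (zdGraph S).CliqueFree 3) :
    (zdGraph S).IsBipartite := by
  by_cases hred : ∀ s : S, s * s = 0 → s = 0
  · by_cases hbot : zdGraph S = ⊥
    · exact (SimpleGraph.colorable_one_iff.2 hbot).mono one_le_two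
    · obtain ⟨a, b, hab⟩ := SimpleGraph.ne_bot_iff_exists_adj.1 hbot
      exact isBipartite_of_cliqueFree_three_of_forall_adj hG fun _ _ =>
        adj_or_adj_of_reduced hG hred hab
  · push Not at hred
    obtain ⟨z, hzz, hz⟩ := hred
    exact isBipartite_of_cliqueFree_three_of_forall_adj (a := ⟨z, hz, z, hz, hzz⟩) hG fun _ _ =>
      adj_or_adj_of_mul_self_eq_zero hG hzz

theorem colorable_of_cliqueFree_add_one {k : ℕ} (hk : k ≤ 2)
    (hG : (zdGraph S).CliqueFree (k + 1)) : (zdGraph S).Colorable k := by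
  interval_cases k
  · exact SimpleGraph.colorable_zero_iff.2 (SimpleGraph.cliqueFree_one.1 hG)
  · exact SimpleGraph.colorable_one_iff.2 (SimpleGraph.cliqueFree_two.1 hG)
  · exact isBipartite_of_cliqueFree_three hG

end zdGraph

end ZeroDivisorGraph

/-- For a commutative semigroup `S` with zero and a positive
integer `n ≤ 2`, the chromatic number of `Γ(S)` equals `n` if and only if the clique
number of `Γ(S)` equals `n` (there is a clique of size `n` and every clique has at
most `n` vertices). -/
theorem chromatic_eq_iff_clique_eq_of_le_two (n : ℕ) (hpos : 1 ≤ n) (hle : n ≤ 2) :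
    (zdGraph S).chromaticNumber = n ↔
      ((∃ T : Finset (zdVerts S), (zdGraph S).IsNClique n T) ∧
        ∀ T : Finset (zdVerts S), (zdGraph S).IsClique ↑T → T.card ≤ n) :=
  chromaticNumber_eq_iff_of_cliqueFree_imp_colorable fun _ hk =>
    zdGraph.colorable_of_cliqueFree_add_one (hk.trans hle)
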